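/- (Lopatinskiĭ determinant for a right-going Lax shock.) In the setting of a 2×2 system of conservation laws ∂ₜf₀(U) + ∂ₓf(U) = 0 with A(u) = f₀'(u)⁻¹f'(u), let (uˡ, uʳ) satisfy the Rankine–Hugoniot conditions with speed χ = χ(uˡ,uʳ), let e₋(uˡ) be an eigenvector of A(uˡ) for its eigenvalue -λ₋(uˡ), and let Φ(uˡ,uʳ) = ⟦f⟧·⟦f₀⟧⊥. Then the scalar Lopatinskiĭ quantity L = ∇_{uˡ}Φ · e₋(uˡ) satisfies L = (χ + λ₋(uˡ)) ⟦f₀⟧⊥ · f₀'(uˡ)e₋(uˡ). In particular, if χ + λ₋(uˡ) > 0 then L ≠ 0 if and only if (f₀'(uˡ)e₋(uˡ)) · ⟦f₀⟧⊥ ≠ 0. -/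

import Mathlib

open Matrix

/-- Rotation of a plane vector by `π/2`. -/
def perp (v : Fin 2 → ℝ) : Fin 2 → ℝ := ![-v 1, v 0]

/-!
By skew-symmetry of the area form `(v, w) ↦ v · w⊥` and the Rankine–Hugoniot relation
`⟦f⟧ = χ ⟦f₀⟧`, the term of `∇_{uˡ}Φ` in which `⟦f₀⟧⊥` is differentiated also pairs with `⟦f₀⟧⊥`:
`∇_{uˡ}Φ · v = (χ f₀'(uˡ)v - f'(uˡ)v) · ⟦f₀⟧⊥`. On an eigenvector, `f'(uˡ)e₋ = -λ₋ f₀'(uˡ)e₋`.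
-/

/-- The area form `(v, w) ↦ v · w⊥` of the plane, with the sign `v · w⊥ = v₁w₀ - v₀w₁`, bundled as
a continuous bilinear map so that the product rule for bilinear maps applies to
`Φ = ⟦f⟧ · ⟦f₀⟧⊥`. -/
noncomputable def areaForm : (Fin 2 → ℝ) →L[ℝ] (Fin 2 → ℝ) →L[ℝ] ℝ :=
  (Matrix.toBilin' !![0, -1; 1, 0]).toContinuousBilinearMap

theorem areaForm_apply (v w : Fin 2 → ℝ) : areaForm v w = v ⬝ᵥ perp w := by
  simp [areaForm, perp, Matrix.toBilin'_apply, dotProduct, Fin.sum_univ_two]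

theorem areaForm_skew (v w : Fin 2 → ℝ) : areaForm v w = -areaForm w v := by
  simp only [areaForm_apply, perp, dotProduct, Fin.sum_univ_two, cons_val_zero, cons_val_one]
  ring

section BilinearJump

variable {𝕜 E F G H : Type*} [NontriviallyNormedField 𝕜]
  [NormedAddCommGroup E] [NormedSpace 𝕜 E] [NormedAddCommGroup F] [NormedSpace 𝕜 F]
  [NormedAddCommGroup G] [NormedSpace 𝕜 G] [NormedAddCommGroup H] [NormedSpace 𝕜 H]

theorem fderiv_bilinear_const_sub_apply (B : F →L[𝕜] G →L[𝕜] H) {f : E → F} {g : E → G} {x : E}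
    (hf : DifferentiableAt 𝕜 f x) (hg : DifferentiableAt 𝕜 g x) (a : F) (b : G) (v : E) :
    fderiv 𝕜 (fun w => B (a - f w) (b - g w)) x v =
      -B (fderiv 𝕜 f x v) (b - g x) - B (a - f x) (fderiv 𝕜 g x v) := by
  rw [B.fderiv_of_bilinear (hf.const_sub a) (hg.const_sub b), fderiv_const_sub, fderiv_const_sub]
  simp only [_root_.add_apply, ContinuousLinearMap.precompR_apply,
    ContinuousLinearMap.precompL_apply, ContinuousLinearMap.compL_apply,
    ContinuousLinearMap.comp_apply, _root_.neg_apply, map_neg]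
  abel

theorem fderiv_skew_jump_apply_of_rankineHugoniot {B : F →L[𝕜] F →L[𝕜] H}
    (hB : ∀ v w, B v w = -B w v) {f₀ f : E → F} {ul ur : E} {χ : 𝕜}
    (hf₀ : DifferentiableAt 𝕜 f₀ ul) (hf : DifferentiableAt 𝕜 f ul)
    (hRH : χ • (f₀ ur - f₀ ul) = f ur - f ul) (v : E) :
    fderiv 𝕜 (fun w => B (f ur - f w) (f₀ ur - f₀ w)) ul v =
      χ • B (fderiv 𝕜 f₀ ul v) (f₀ ur - f₀ ul) - B (fderiv 𝕜 f ul v) (f₀ ur - f₀ ul) := by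
  have jump_term : B (f ur - f ul) (fderiv 𝕜 f₀ ul v) =
      -(χ • B (fderiv 𝕜 f₀ ul v) (f₀ ur - f₀ ul)) := by
    rw [← hRH, hB, map_smul]
  rw [fderiv_bilinear_const_sub_apply B hf hf₀, jump_term]
  abel

theorem fderiv_skew_jump_apply_of_eigenvector {B : F →L[𝕜] F →L[𝕜] H}
    (hB : ∀ v w, B v w = -B w v) {f₀ f : E → F} {ul ur e : E} {χ lm : 𝕜}
    (hf₀ : DifferentiableAt 𝕜 f₀ ul) (hf : DifferentiableAt 𝕜 f ul)
    (hRH : χ • (f₀ ur - f₀ ul) = f ur - f ul)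
    (heig : fderiv 𝕜 f ul e = (-lm) • fderiv 𝕜 f₀ ul e) :
    fderiv 𝕜 (fun w => B (f ur - f w) (f₀ ur - f₀ w)) ul e =
      (χ + lm) • B (fderiv 𝕜 f₀ ul e) (f₀ ur - f₀ ul) := by
  rw [fderiv_skew_jump_apply_of_rankineHugoniot hB hf₀ hf hRH, heig, map_smul, _root_.smul_apply,
    neg_smul, sub_neg_eq_add, ← add_smul]

end BilinearJump

theorem stmt17_general {E : Type*} [NormedAddCommGroup E] [NormedSpace ℝ E]
    {f₀ f : E → Fin 2 → ℝ} {ul ur e : E} {lm χ : ℝ}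
    (hf₀ : DifferentiableAt ℝ f₀ ul) (hf : DifferentiableAt ℝ f ul)
    (hRH : χ • (f₀ ur - f₀ ul) = f ur - f ul)
    (heig : fderiv ℝ f ul e = (-lm) • fderiv ℝ f₀ ul e) :
    fderiv ℝ (fun w => (f ur - f w) ⬝ᵥ perp (f₀ ur - f₀ w)) ul e =
      (χ + lm) * (perp (f₀ ur - f₀ ul) ⬝ᵥ fderiv ℝ f₀ ul e) ∧
    (χ + lm ≠ 0 →
      (fderiv ℝ (fun w => (f ur - f w) ⬝ᵥ perp (f₀ ur - f₀ w)) ul e ≠ 0 ↔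
        fderiv ℝ f₀ ul e ⬝ᵥ perp (f₀ ur - f₀ ul) ≠ 0)) := by
  have lopatinskii : fderiv ℝ (fun w => (f ur - f w) ⬝ᵥ perp (f₀ ur - f₀ w)) ul e =
      (χ + lm) * (fderiv ℝ f₀ ul e ⬝ᵥ perp (f₀ ur - f₀ ul)) := by
    simpa only [areaForm_apply, smul_eq_mul] using
      fderiv_skew_jump_apply_of_eigenvector areaForm_skew hf₀ hf hRH heig
  refine ⟨by rw [lopatinskii, dotProduct_comm], fun hspeed => ?_⟩
  rw [lopatinskii, mul_ne_zero_iff_left hspeed]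

/-- **Lopatinskiĭ determinant for a right-going Lax shock.** At a Rankine–Hugoniot point
`(uˡ,uʳ)` with speed `χ`, and with `e₋` an eigenvector of `A(uˡ) = f₀'(uˡ)⁻¹f'(uˡ)` for the
eigenvalue `-λ₋` (expressed as `f'(uˡ)e₋ = -λ₋ f₀'(uˡ)e₋`), the scalar Lopatinskiĭ quantity
`L = ∇_{uˡ}Φ · e₋` satisfies `L = (χ + λ₋) ⟦f₀⟧⊥ · f₀'(uˡ)e₋`; in particular if
`χ + λ₋ > 0` then `L ≠ 0 ↔ (f₀'(uˡ)e₋) · ⟦f₀⟧⊥ ≠ 0`. -/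
theorem stmt17 (f0 f : (Fin 2 → ℝ) → (Fin 2 → ℝ))
    (hf0 : ContDiff ℝ (⊤ : ℕ∞) f0) (hf : ContDiff ℝ (⊤ : ℕ∞) f)
    (hinv : ∀ u : Fin 2 → ℝ, Function.Bijective (fderiv ℝ f0 u))
    (ul ur em : Fin 2 → ℝ) (lm χ₀ : ℝ)
    (hne : f0 ur ≠ f0 ul)
    (hRH : χ₀ • (f0 ur - f0 ul) = f ur - f ul)
    (hem : em ≠ 0)
    (heig : fderiv ℝ f ul em = (-lm) • fderiv ℝ f0 ul em) :
    fderiv ℝ (fun w : Fin 2 → ℝ => (f ur - f w) ⬝ᵥ perp (f0 ur - f0 w)) ul em =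
      (χ₀ + lm) * (perp (f0 ur - f0 ul) ⬝ᵥ fderiv ℝ f0 ul em) ∧
    (0 < χ₀ + lm →
      (fderiv ℝ (fun w : Fin 2 → ℝ => (f ur - f w) ⬝ᵥ perp (f0 ur - f0 w)) ul em ≠ 0 ↔
        (fderiv ℝ f0 ul em) ⬝ᵥ perp (f0 ur - f0 ul) ≠ 0)) := by
  exact (stmt17_general (hf0.differentiable (by simp) ul) (hf.differentiable (by simp) ul)
    hRH heig).imp_right fun h hpos => h hpos.ne'
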